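/- If A is a C*-algebra (A ≠ {0}) in which the spectrum of every self-adjoint element is finite, then there exist n ∈ ℕ and d₁, …, d_n ∈ ℕ such that A is *-isomorphic to the direct sum of matrix algebras ⨁_{k=1}^{n} M_{d_k}(ℂ); moreover A is abelian if and only if d_k = 1 for every k. -/

import Mathlib

/-!
A self-adjoint element of finite spectrum is a combination of its spectral projections. If all
self-adjoint elements have finite spectrum, then a family of nonzero orthogonal projections `rᵢ` is
finite, since otherwise `∑ 2⁻ⁱ rᵢ` would have infinitely many eigenvalues. So there is no infinite
descending chain of projections, every nonzero projection dominates a minimal one, and a maximal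
orthogonal family of minimal projections is finite with sum a unit of `A`. Grouping this family
into Murray–von Neumann classes and choosing in each class partial isometries from one projection
onto the others gives the first columns of a system of matrix units, one block per class.
-/

section Projections

variable {A : Type*}

theorem mul_eq_zero_of_isSelfAdjoint [NonUnitalSemiring A] [StarRing A] {a b : A}
    (ha : IsSelfAdjoint a) (hb : IsSelfAdjoint b) (h : a * b = 0) : b * a = 0 := by
  simpa [ha.star_eq, hb.star_eq] using congr(star $h)

theorem mul_star_mul_self_of_isIdempotentElem [NonUnitalNormedRing A] [StarRing A] [CStarRing A]
    {v : A} (hv : IsIdempotentElem (star v * v)) : v * (star v * v) = v := by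
  rw [← sub_eq_zero, ← CStarRing.star_mul_self_eq_zero_iff]
  have h : star v * (v * (star v * v)) = star v * v := by rw [← mul_assoc, hv.eq]
  simp only [star_sub, star_mul, star_star, sub_mul, mul_sub, mul_assoc, h, sub_self]

theorem sum_mul_eq_self_of_forall_mul_eq_zero [NonUnitalRing A] {s : Finset A}
    (hs : ∀ p ∈ s, IsIdempotentElem p) (horth : (s : Set A).Pairwise fun p q ↦ p * q = 0)
    (hmax : ∀ a, (∀ p ∈ s, p * a = 0) → a = 0) (a : A) : (∑ p ∈ s, p) * a = a := by
  refine sub_eq_zero.mp (hmax _ fun p hp ↦ ?_)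
  have hsum : p * ∑ q ∈ s, q = p := by
    rw [Finset.mul_sum, Finset.sum_eq_single_of_mem p hp fun q hq hqp ↦ horth hp hq hqp.symm,
      (hs p hp).eq]
  rw [mul_sub, ← mul_assoc, hsum, sub_self]

theorem exists_maximal_forall_mem_and_pairwise {α : Type*} (P : α → Prop) (r : α → α → Prop) :
    ∃ S : Set α, Maximal (fun S ↦ (∀ x ∈ S, P x) ∧ S.Pairwise r) S := by
  refine zorn_subset {S | (∀ x ∈ S, P x) ∧ S.Pairwise r} fun c hc hchain ↦
    ⟨⋃₀ c, ⟨?_, ?_⟩, fun S ↦ Set.subset_sUnion_of_mem⟩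
  · rintro x ⟨S, hS, hx⟩
    exact (hc hS).1 x hx
  · exact (Set.pairwise_sUnion hchain.directedOn).mpr fun S hS ↦ (hc hS).2

end Projections

section Spectrum

theorem mem_quasispectrum_of_mul_eq_smul {R A : Type*} [CommRing R] [NonUnitalRing A] [Module R A]
    [IsScalarTower R A A] [SMulCommClass R A A] {a x : A} {c : R} (hx : x ≠ 0)
    (hax : a * x = c • x) : c ∈ quasispectrum R a := by
  rw [Unitization.quasispectrum_eq_spectrum_inr R a, spectrum.mem_iff]
  intro hunit
  have h : (algebraMap R (Unitization R A) c - a) * (x : Unitization R A) = 0 := by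
    rw [sub_mul, ← Algebra.smul_def, ← Unitization.inr_smul, ← Unitization.inr_mul, hax, sub_self]
  exact hx (Unitization.inr_injective (hunit.mul_right_eq_zero.mp h))

variable {A : Type*} [NonUnitalCStarAlgebra A]

theorem exists_mem_quasispectrum_ne_zero {a : A} [IsStarNormal a] (ha : a ≠ 0) :
    ∃ c ∈ quasispectrum ℂ a, c ≠ 0 := by
  by_contra! hzero
  refine ha ?_
  rw [← cfcₙ_id ℂ a, ← cfcₙ_const_zero ℂ a]
  exact cfcₙ_congr hzero

theorem exists_isStarProjection_mul_eq_smul {a : A} [IsStarNormal a]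
    (hfin : (quasispectrum ℂ a).Finite) {c : ℂ} (hc : c ∈ quasispectrum ℂ a) (hc0 : c ≠ 0) :
    ∃ r : A, IsStarProjection r ∧ r ≠ 0 ∧ a * r = c • r := by
  have hf : ContinuousOn (Pi.single c 1 : ℂ → ℂ) (quasispectrum ℂ a) := hfin.continuousOn _
  have hf0 : (Pi.single c 1 : ℂ → ℂ) 0 = 0 := Pi.single_eq_of_ne hc0.symm 1
  have hspec := cfcₙ_map_quasispectrum (Pi.single c 1) a hf hf0
  refine ⟨cfcₙ (Pi.single c 1) a, ?_, fun h0 ↦ ?_, ?_⟩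
  · refine isStarProjection_iff_quasispectrum_subset_and_isStarNormal.mpr
      ⟨?_, cfcₙ_predicate (p := IsStarNormal) _ a⟩
    rw [hspec]
    rintro _ ⟨z, -, rfl⟩
    by_cases hz : z = c <;> simp [hz]
  · have h1 : (1 : ℂ) ∈ quasispectrum ℂ (0 : A) := by
      rw [← h0, hspec]
      exact ⟨c, hc, Pi.single_eq_same c 1⟩
    rw [CFC.quasispectrum_zero_eq] at h1
    exact one_ne_zero h1
  · conv_lhs => enter [1]; rw [← cfcₙ_id' ℂ a]
    rw [← cfcₙ_mul (fun z ↦ z) (Pi.single c 1) a, ← cfcₙ_smul c (Pi.single c 1) a]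
    refine cfcₙ_congr fun z _ ↦ ?_
    by_cases hz : z = c <;> simp [hz]

theorem exists_isSelfAdjoint_forall_mul_eq_smul {ι : Type*} {r : ι → A}
    (hr : ∀ i, IsStarProjection (r i)) (horth : Pairwise fun i j ↦ r i * r j = 0)
    {c : ι → ℝ} (hc : Summable c) :
    ∃ a : A, IsSelfAdjoint a ∧ ∀ i, a * r i = (c i : ℂ) • r i := by
  have hsum : Summable fun i ↦ (c i : ℂ) • r i := by
    refine hc.norm.of_norm_bounded fun i ↦ ?_
    rw [norm_smul, Complex.norm_real]
    exact mul_le_of_le_one_right (norm_nonneg _) (IsStarProjection.norm_le (r i) (hr i))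
  refine ⟨∑' i, (c i : ℂ) • r i, ?_, fun i ↦ ?_⟩
  · rw [IsSelfAdjoint, tsum_star]
    simp [(hr _).isSelfAdjoint.star_eq]
  · rw [← hsum.tsum_mul_right, tsum_eq_single i, smul_mul_assoc, (hr i).isIdempotentElem.eq]
    intro j hj
    rw [smul_mul_assoc, horth hj, smul_zero]

theorem finite_of_orthogonal_of_finite_quasispectrum
    (hA : ∀ a : A, IsSelfAdjoint a → (quasispectrum ℂ a).Finite) {ι : Type*} {r : ι → A}
    (hr : ∀ i, IsStarProjection (r i)) (hr0 : ∀ i, r i ≠ 0)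
    (horth : Pairwise fun i j ↦ r i * r j = 0) : Finite ι := by
  by_contra hinf
  rw [not_finite_iff_infinite] at hinf
  let e := Infinite.natEmbedding ι
  obtain ⟨a, ha, har⟩ := exists_isSelfAdjoint_forall_mul_eq_smul (fun n ↦ hr (e n))
    (horth.comp_of_injective e.injective) summable_geometric_two
  refine Set.infinite_of_injective_forall_mem (fun m n hmn ↦ ?_)
    (fun n ↦ mem_quasispectrum_of_mul_eq_smul (hr0 (e n)) (har n)) (hA a ha)
  exact pow_right_injective₀ (a := (1 / 2 : ℝ)) (by norm_num) (by norm_num)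
    (Complex.ofReal_injective hmn)

variable [PartialOrder A] [StarOrderedRing A]

theorem sub_mul_eq_zero_of_le_of_le {p q r : A} (hp : IsStarProjection p) (hq : IsStarProjection q)
    (hr : IsStarProjection r) (hrq : r ≤ q) (hqp : q ≤ p) : (p - q) * r = 0 := by
  rw [sub_mul, (hr.le_iff_mul_eq_right hp).mp (hrq.trans hqp), (hr.le_iff_mul_eq_right hq).mp hrq,
    sub_self]

theorem pairwise_sub_succ_mul_sub_succ_eq_zero_of_antitone {p : ℕ → A}
    (hp : ∀ n, IsStarProjection (p n)) (hanti : Antitone p) :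
    Pairwise fun m n ↦ (p m - p (m + 1)) * (p n - p (n + 1)) = 0 := by
  have hsa (n : ℕ) : IsSelfAdjoint (p n - p (n + 1)) :=
    (hp n).isSelfAdjoint.sub (hp (n + 1)).isSelfAdjoint
  have hlt {m n : ℕ} (hmn : m < n) : (p m - p (m + 1)) * (p n - p (n + 1)) = 0 := by
    have hzero {k : ℕ} (hk : m + 1 ≤ k) : (p m - p (m + 1)) * p k = 0 :=
      sub_mul_eq_zero_of_le_of_le (hp m) (hp _) (hp k) (hanti hk) (hanti m.le_succ)
    rw [mul_sub, hzero hmn, hzero (hmn.trans n.lt_succ_self), sub_self]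
  intro m n hmn
  rcases hmn.lt_or_gt with h | h
  · exact hlt h
  · exact mul_eq_zero_of_isSelfAdjoint (hsa n) (hsa m) (hlt h)

theorem wellFoundedLT_isStarProjection
    (hA : ∀ a : A, IsSelfAdjoint a → (quasispectrum ℂ a).Finite) :
    WellFoundedLT {p : A // IsStarProjection p} := by
  refine ⟨RelEmbedding.wellFounded_iff_isEmpty.mpr ⟨fun p ↦ ?_⟩⟩
  have hanti : StrictAnti fun n ↦ (p n : A) := fun m n hmn ↦ p.map_rel_iff.mpr hmn
  have hsub (n : ℕ) : IsStarProjection (p n - p (n + 1) : A) :=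
    ((p (n + 1)).2.le_iff_sub (p n).2).mp (hanti n.lt_succ_self).le
  have : Finite ℕ := finite_of_orthogonal_of_finite_quasispectrum hA hsub
    (fun n ↦ sub_ne_zero.mpr (hanti n.lt_succ_self).ne')
    (pairwise_sub_succ_mul_sub_succ_eq_zero_of_antitone (fun n ↦ (p n).2) hanti.antitone)
  exact not_finite ℕ

end Spectrum

/-- A nonzero projection `p` is minimal when the corner `p A p` consists of the scalar multiples
of `p`. This is in general stronger than minimality among nonzero projections. -/
structure IsMinimalProjection (𝕜 : Type*) {A : Type*} [Mul A] [Star A] [Zero A] [SMul 𝕜 A]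
    (p : A) : Prop extends IsStarProjection p where
  ne_zero : p ≠ 0
  exists_smul_eq : ∀ a : A, ∃ c : 𝕜, p * a * p = c • p

namespace IsMinimalProjection

section Algebra

variable {𝕜 A : Type*} [Field 𝕜] [NonUnitalRing A] [StarRing A] [Module 𝕜 A]
  [IsScalarTower 𝕜 A A] {p : A}

theorem eq_of_isIdempotentElem (hp : IsMinimalProjection 𝕜 p) {r : A} (hr : IsIdempotentElem r)
    (hr0 : r ≠ 0) (hpr : p * r = r) (hrp : r * p = r) : r = p := by
  obtain ⟨c, hc⟩ := hp.exists_smul_eq r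
  rw [hpr, hrp] at hc
  have hcr : c • r = r := by
    conv_lhs => rw [← hpr]
    rw [← smul_mul_assoc, ← hc, hr.eq]
  have hc1 : c = 1 := smul_left_injective 𝕜 hr0 (hcr.trans (one_smul 𝕜 r).symm)
  rw [hc, hc1, one_smul]

variable [SMulCommClass 𝕜 A A]

/-- The linear functional `f` on `A` with `p * a * p = f a • p`; in a C⋆-algebra it is the pure
state supported by `p`. -/
noncomputable def functional (hp : IsMinimalProjection 𝕜 p) : A →ₗ[𝕜] 𝕜 :=
  (LinearEquiv.coord 𝕜 A p hp.ne_zero).toLinearMap ∘ₗ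
    (LinearMap.mulLeftRight 𝕜 (p, p)).codRestrict (Submodule.span 𝕜 {p}) fun a ↦
      Submodule.mem_span_singleton.mpr ((hp.exists_smul_eq a).imp fun _ ↦ Eq.symm)

theorem functional_smul (hp : IsMinimalProjection 𝕜 p) (a : A) :
    hp.functional a • p = p * a * p :=
  LinearEquiv.coord_apply_smul 𝕜 A p hp.ne_zero _

end Algebra

section CStarAlgebra

variable {A : Type*} [NonUnitalCStarAlgebra A] {p q : A}

open scoped ComplexOrder in
theorem exists_pos_star_mul_self_eq_smul (hp : IsMinimalProjection ℂ p) {x : A} (hxp : x * p = x)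
    (hx : x ≠ 0) : ∃ c : ℝ, 0 < c ∧ star x * x = (c : ℂ) • p := by
  let _ := CStarAlgebra.spectralOrder A
  have := CStarAlgebra.spectralOrderedRing A
  have hpx : p * star x = star x := by simpa [hp.isSelfAdjoint.star_eq] using congr(star $hxp)
  obtain ⟨c, hc⟩ := hp.exists_smul_eq (star x * x)
  rw [← mul_assoc, hpx, mul_assoc, hxp] at hc
  have hc0 : c ≠ 0 := by
    rintro rfl
    rw [zero_smul, CStarRing.star_mul_self_eq_zero_iff] at hc
    exact hx hc
  have hcpos : 0 ≤ c := quasispectrum_nonneg_of_nonneg (star x * x) (star_mul_self_nonneg x) c <|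
    mem_quasispectrum_of_mul_eq_smul hp.ne_zero <| by
      rw [hc, smul_mul_assoc, hp.isIdempotentElem.eq]
  obtain ⟨t, ht, rfl⟩ := RCLike.pos_iff_exists_ofReal.mp (hcpos.lt_of_ne' hc0)
  exact ⟨t, ht, hc⟩

theorem exists_smul_star_mul_self_eq (hp : IsMinimalProjection ℂ p) {x : A} (hxp : x * p = x)
    (hx : x ≠ 0) : ∃ s : ℂ, star (s • x) * (s • x) = p := by
  obtain ⟨c, hc, hxx⟩ := hp.exists_pos_star_mul_self_eq_smul hxp hx
  refine ⟨((√c)⁻¹ : ℝ), ?_⟩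
  have hscalar : (√c)⁻¹ * ((√c)⁻¹ * c) = 1 := by
    rw [← mul_assoc, ← mul_inv, Real.mul_self_sqrt hc.le, inv_mul_cancel₀ hc.ne']
  rw [star_smul, smul_mul_smul_comm, hxx, smul_smul, Complex.star_def, Complex.conj_ofReal,
    mul_assoc]
  exact_mod_cast congr(($hscalar : ℂ) • p).trans (by simp)

/-- Minimality among the nonzero projections suffices, because the spectral projections of a
self-adjoint element of `p A p` are dominated by `p`. -/
theorem of_minimal [PartialOrder A] [StarOrderedRing A]
    (hA : ∀ a : A, IsSelfAdjoint a → (quasispectrum ℂ a).Finite)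
    (hp : Minimal (fun p : A ↦ IsStarProjection p ∧ p ≠ 0) p) : IsMinimalProjection ℂ p := by
  have hpp : p * p = p := hp.prop.1.isIdempotentElem
  have hsa {a : A} (ha : IsSelfAdjoint a) : ∃ c : ℂ, p * a * p = c • p := by
    by_cases h0 : p * a * p = 0
    · exact ⟨0, by rw [h0, zero_smul]⟩
    have hb : IsSelfAdjoint (p * a * p) := by
      simpa [hp.prop.1.isSelfAdjoint.star_eq] using ha.conjugate p
    have := hb.isStarNormal
    obtain ⟨c, hc, hc0⟩ := exists_mem_quasispectrum_ne_zero h0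
    obtain ⟨r, hr, hr0, hbr⟩ := exists_isStarProjection_mul_eq_smul (hA _ hb) hc hc0
    have hpr : p * r = r := by
      refine smul_right_injective A hc0 (?_ : c • (p * r) = c • r)
      rw [← mul_smul_comm, ← hbr]
      simp only [← mul_assoc, hpp]
    have hrp : r = p := hp.eq_of_le ⟨hr, hr0⟩ (hr.le_of_mul_eq_right hp.prop.1 hpr)
    rw [hrp] at hbr
    exact ⟨c, by rw [← hbr, mul_assoc (p * a), hpp]⟩
  refine ⟨hp.prop.1, hp.prop.2, fun a ↦ ?_⟩
  obtain ⟨c, hc⟩ := hsa (realPart a).2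
  obtain ⟨d, hd⟩ := hsa (imaginaryPart a).2
  refine ⟨c + Complex.I * d, ?_⟩
  conv_lhs => rw [← realPart_add_I_smul_imaginaryPart a]
  rw [mul_add, add_mul, hc, mul_smul_comm, smul_mul_assoc, hd, smul_smul, add_smul]

end CStarAlgebra

end IsMinimalProjection

section FiniteSpectra

variable {A : Type*} [NonUnitalCStarAlgebra A]

theorem exists_isMinimalProjection_mul_eq
    (hA : ∀ a : A, IsSelfAdjoint a → (quasispectrum ℂ a).Finite) {r : A} (hr : IsStarProjection r)
    (hr0 : r ≠ 0) : ∃ p, IsMinimalProjection ℂ p ∧ r * p = p := by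
  let _ := CStarAlgebra.spectralOrder A
  have := CStarAlgebra.spectralOrderedRing A
  have := wellFoundedLT_isStarProjection hA
  obtain ⟨p, hpr, hp⟩ := exists_minimal_le_of_wellFoundedLT
    (fun p : {p : A // IsStarProjection p} ↦ (p : A) ≠ 0) ⟨r, hr⟩ hr0
  have hmin : Minimal (fun p : A ↦ IsStarProjection p ∧ p ≠ 0) p :=
    ⟨⟨p.2, hp.prop⟩, fun q hq hqp ↦ hp.le_of_le (y := ⟨q, hq.1⟩) hq.2 hqp⟩
  exact ⟨p, .of_minimal hA hmin, (p.2.le_iff_mul_eq_right hr).mp hpr⟩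

theorem exists_isMinimalProjection_forall_mul_eq_zero
    (hA : ∀ a : A, IsSelfAdjoint a → (quasispectrum ℂ a).Finite) {S : Set A} {a : A} (ha0 : a ≠ 0)
    (ha : ∀ p ∈ S, p * a = 0) : ∃ q, IsMinimalProjection ℂ q ∧ ∀ p ∈ S, p * q = 0 := by
  have hb : IsSelfAdjoint (a * star a) := .mul_star_self a
  have := hb.isStarNormal
  obtain ⟨c, hc, hc0⟩ := exists_mem_quasispectrum_ne_zero
    ((CStarRing.mul_star_self_eq_zero_iff a).not.mpr ha0)
  obtain ⟨r, hr, hr0, hbr⟩ := exists_isStarProjection_mul_eq_smul (hA _ hb) hc hc0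
  obtain ⟨q, hq, hrq⟩ := exists_isMinimalProjection_mul_eq hA hr hr0
  refine ⟨q, hq, fun p hp ↦ ?_⟩
  have hpr : p * r = 0 := by
    refine smul_right_injective A hc0 (?_ : c • (p * r) = c • 0)
    rw [← mul_smul_comm, ← hbr, ← mul_assoc, ← mul_assoc, ha p hp, zero_mul, zero_mul, smul_zero]
  rw [← hrq, ← mul_assoc, hpr, zero_mul]

theorem exists_finset_isMinimalProjection
    (hA : ∀ a : A, IsSelfAdjoint a → (quasispectrum ℂ a).Finite) :
    ∃ s : Finset A, (∀ p ∈ s, IsMinimalProjection ℂ p) ∧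
      (s : Set A).Pairwise (fun p q ↦ p * q = 0) ∧ ∀ a, (∑ p ∈ s, p) * a = a := by
  obtain ⟨S, hS⟩ := exists_maximal_forall_mem_and_pairwise (IsMinimalProjection ℂ (A := A))
    fun p q ↦ p * q = 0
  obtain ⟨hmin, horth⟩ := hS.prop
  have : Finite S := finite_of_orthogonal_of_finite_quasispectrum hA
    (fun p : S ↦ (hmin p p.2).toIsStarProjection) (fun p ↦ (hmin p p.2).ne_zero)
    fun p q hpq ↦ horth p.2 q.2 (Subtype.coe_ne_coe.mpr hpq)
  have hmax (a : A) (ha : ∀ p ∈ S, p * a = 0) : a = 0 := by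
    by_contra ha0
    obtain ⟨q, hq, hSq⟩ := exists_isMinimalProjection_forall_mul_eq_zero hA ha0 ha
    have hqS : q ∈ S := hS.mem_of_prop_insert
      ⟨Set.forall_mem_insert.mpr ⟨hq, hmin⟩, horth.insert fun p hp _ ↦
        ⟨mul_eq_zero_of_isSelfAdjoint (hmin p hp).isSelfAdjoint hq.isSelfAdjoint (hSq p hp),
          hSq p hp⟩⟩
    exact hq.ne_zero (hq.isIdempotentElem.eq.symm.trans (hSq q hqS))
  lift S to Finset A using S.toFinite
  exact ⟨S, hmin, horth, sum_mul_eq_self_of_forall_mul_eq_zero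
    (fun p hp ↦ (hmin p hp).isIdempotentElem) horth hmax⟩

end FiniteSpectra

/-- Murray–von Neumann equivalence of projections: some partial isometry has initial projection `p`
and final projection `q`. -/
def MurrayVonNeumannEquiv {A : Type*} [Mul A] [Star A] (p q : A) : Prop :=
  ∃ v : A, star v * v = p ∧ v * star v = q

namespace MurrayVonNeumannEquiv

section Semigroup

variable {A : Type*} [Semigroup A] [StarMul A] {p q r : A}

theorem refl (hp : IsStarProjection p) : MurrayVonNeumannEquiv p p :=
  ⟨p, by rw [hp.isSelfAdjoint.star_eq, hp.isIdempotentElem.eq],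
    by rw [hp.isSelfAdjoint.star_eq, hp.isIdempotentElem.eq]⟩

theorem symm : MurrayVonNeumannEquiv p q → MurrayVonNeumannEquiv q p :=
  fun ⟨v, hp, hq⟩ ↦ ⟨star v, by rw [star_star, hq], by rw [star_star, hp]⟩

theorem trans (hp : IsIdempotentElem p) (hr : IsIdempotentElem r) :
    MurrayVonNeumannEquiv p q → MurrayVonNeumannEquiv q r → MurrayVonNeumannEquiv p r := by
  rintro ⟨v, hvp, hvq⟩ ⟨w, hwq, hwr⟩
  refine ⟨w * v, ?_, ?_⟩
  · calc star (w * v) * (w * v) = star v * (star w * w) * v := by simp only [star_mul, mul_assoc]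
      _ = star v * v * (star v * v) := by rw [hwq, ← hvq]; simp only [mul_assoc]
      _ = p := by rw [hvp, hp.eq]
  · calc w * v * star (w * v) = w * (v * star v) * star w := by simp only [star_mul, mul_assoc]
      _ = w * star w * (w * star w) := by rw [hvq, ← hwq]; simp only [mul_assoc]
      _ = r := by rw [hwr, hr.eq]

/-- Murray–von Neumann equivalence of the members of a family of projections, as a relation on the
indices. -/
def setoid {ι : Type*} {e : ι → A} (he : ∀ i, IsStarProjection (e i)) : Setoid ι where
  r i j := MurrayVonNeumannEquiv (e i) (e j)
  iseqv :=
    { refl i := .refl (he i)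
      symm := .symm
      trans := .trans (he _).isIdempotentElem (he _).isIdempotentElem }

end Semigroup

theorem of_mul_mul_ne_zero {A : Type*} [NonUnitalCStarAlgebra A] {p q a : A}
    (hp : IsMinimalProjection ℂ p) (hq : IsMinimalProjection ℂ q) (ha : q * a * p ≠ 0) :
    MurrayVonNeumannEquiv p q := by
  have hxp : q * a * p * p = q * a * p := by rw [mul_assoc, hp.isIdempotentElem.eq]
  obtain ⟨s, hs⟩ := hp.exists_smul_star_mul_self_eq hxp ha
  set v := s • (q * a * p) with hv
  have hvp : v * p = v := by rw [hv, smul_mul_assoc, hxp]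
  have hqv : q * v = v := by
    rw [hv, mul_smul_comm, ← mul_assoc, ← mul_assoc, hq.isIdempotentElem.eq]
  have hvq : star v * q = star v := by simpa [hq.isSelfAdjoint.star_eq] using congr(star $hqv)
  have hv0 : v ≠ 0 := by
    intro h0
    exact hp.ne_zero (by rw [← hs, h0, mul_zero])
  refine ⟨v, hs, hq.eq_of_isIdempotentElem ?_ ?_ ?_ ?_⟩
  · rw [IsIdempotentElem, mul_assoc, ← mul_assoc (star v), hs, ← mul_assoc, hvp]
  · exact (CStarRing.mul_star_self_eq_zero_iff v).not.mpr hv0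
  · rw [← mul_assoc, hqv]
  · rw [mul_assoc, hvq]

end MurrayVonNeumannEquiv

/-- `v k i` plays the role of the matrix unit `Eᵢ₁` in the block `k`, and `u k` that of `E₁₁`: the
first columns of a system of matrix units for the sum of matrix algebras of sizes `m k`. The field
`sum_mul_star_mul` says that the diagonal units `v k i * star (v k i)` add up to a unit of `A`. -/
structure IsMatrixUnitColumns (𝕜 : Type*) {A κ : Type*} {m : κ → Type*} [Fintype κ]
    [∀ k, Fintype (m k)] [NonUnitalSemiring A] [Star A] [SMul 𝕜 A] (u : κ → A)
    (v : ∀ k, m k → A) : Prop where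
  isMinimalProjection : ∀ k, IsMinimalProjection 𝕜 (u k)
  mul_mul_eq_zero : ∀ {k l}, k ≠ l → ∀ a, u k * a * u l = 0
  mul_eq : ∀ k i, v k i * u k = v k i
  star_mul_self : ∀ k i, star (v k i) * v k i = u k
  star_mul_of_ne : ∀ k {i j}, i ≠ j → star (v k i) * v k j = 0
  sum_mul_star_mul : ∀ a, (∑ k, ∑ i, v k i * star (v k i)) * a = a

namespace IsMatrixUnitColumns

variable {𝕜 A κ : Type*} {m : κ → Type*} [Fintype κ] [∀ k, Fintype (m k)] [Field 𝕜]
  [NonUnitalRing A] [StarRing A] [Module 𝕜 A] {u : κ → A} {v : ∀ k, m k → A}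

theorem mul_star_eq (h : IsMatrixUnitColumns 𝕜 u v) (k : κ) (i : m k) :
    u k * star (v k i) = star (v k i) := by
  simpa [(h.isMinimalProjection k).isSelfAdjoint.star_eq] using congr(star $(h.mul_eq k i))

theorem star_mul_mul_of_block_ne (h : IsMatrixUnitColumns 𝕜 u v) {k l : κ} (hkl : k ≠ l) (i : m k)
    (j : m l) (a : A) : star (v k i) * a * v l j = 0 := by
  rw [← h.mul_star_eq, ← h.mul_eq l j, ← h.mul_mul_eq_zero hkl (star (v k i) * a * v l j)]
  simp only [mul_assoc]

theorem star_mul_of_block_ne (h : IsMatrixUnitColumns 𝕜 u v) {k l : κ} (hkl : k ≠ l) (i : m k)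
    (j : m l) : star (v k i) * v l j = 0 := by
  rw [← h.mul_star_eq, ← h.mul_eq l j, ← mul_assoc, mul_assoc (u k), h.mul_mul_eq_zero hkl]

theorem mul_sum_mul_star (h : IsMatrixUnitColumns 𝕜 u v) (a : A) :
    a * ∑ k, ∑ i, v k i * star (v k i) = a := by
  simpa [star_sum] using congr(star $(h.sum_mul_star_mul (star a)))

variable [IsScalarTower 𝕜 A A] [SMulCommClass 𝕜 A A]

/-- The `(i, j)` entry of the block `k` of the matrix representing `a`. -/
noncomputable def entry (h : IsMatrixUnitColumns 𝕜 u v) (k : κ) (i j : m k) (a : A) : 𝕜 :=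
  (h.isMinimalProjection k).functional (star (v k i) * a * v k j)

theorem entry_smul (h : IsMatrixUnitColumns 𝕜 u v) (k : κ) (i j : m k) (a : A) :
    h.entry k i j a • u k = star (v k i) * a * v k j := by
  rw [entry, (h.isMinimalProjection k).functional_smul, ← mul_assoc, ← mul_assoc, h.mul_star_eq,
    mul_assoc _ (v k j), h.mul_eq]

theorem entry_eq_iff (h : IsMatrixUnitColumns 𝕜 u v) {k : κ} {i j : m k} {a : A} {c : 𝕜} :
    h.entry k i j a = c ↔ star (v k i) * a * v k j = c • u k := by
  rw [← h.entry_smul, (smul_left_injective 𝕜 (h.isMinimalProjection k).ne_zero).eq_iff]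

theorem entry_mul (h : IsMatrixUnitColumns 𝕜 u v) (k : κ) (i j : m k) (a b : A) :
    h.entry k i j (a * b) = ∑ l, h.entry k i l a * h.entry k l j b := by
  have hterm (l : κ) (p : m l) : star (v k i) * (a * (v l p * star (v l p) * b)) * v k j =
      star (v k i) * a * v l p * (star (v l p) * b * v k j) := by simp only [mul_assoc]
  rw [entry_eq_iff]
  conv_lhs => rw [← h.sum_mul_star_mul b]
  simp only [Finset.sum_mul, Finset.mul_sum, hterm]
  rw [Fintype.sum_eq_single k fun l hl ↦ Finset.sum_eq_zero fun p _ ↦ by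
    rw [h.star_mul_mul_of_block_ne hl.symm, zero_mul], Finset.sum_smul]
  refine Finset.sum_congr rfl fun l _ ↦ ?_
  rw [← h.entry_smul, ← h.entry_smul, smul_mul_smul_comm,
    (h.isMinimalProjection k).isIdempotentElem.eq]

theorem entry_star [StarRing 𝕜] [StarModule 𝕜 A] (h : IsMatrixUnitColumns 𝕜 u v) (k : κ)
    (i j : m k) (a : A) : h.entry k i j (star a) = star (h.entry k j i a) := by
  rw [entry_eq_iff]
  simpa [(h.isMinimalProjection k).isSelfAdjoint.star_eq, mul_assoc] using
    congr(star $(h.entry_smul k j i a)).symm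

theorem sum_entry_smul (h : IsMatrixUnitColumns 𝕜 u v) (a : A) :
    ∑ k, ∑ i, ∑ j, h.entry k i j a • (v k i * star (v k j)) = a := by
  have hterm (k l : κ) (i : m k) (j : m l) :
      v k i * star (v k i) * (a * (v l j * star (v l j))) =
        v k i * (star (v k i) * a * v l j) * star (v l j) := by simp only [mul_assoc]
  conv_rhs => rw [← h.sum_mul_star_mul a, ← h.mul_sum_mul_star a]
  simp only [Finset.sum_mul]
  refine Finset.sum_congr rfl fun k _ ↦ Finset.sum_congr rfl fun i _ ↦ ?_
  simp only [Finset.mul_sum, hterm]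
  rw [Fintype.sum_eq_single k fun l hl ↦ Finset.sum_eq_zero fun j _ ↦ by
    rw [h.star_mul_mul_of_block_ne hl.symm, mul_zero, zero_mul]]
  refine Finset.sum_congr rfl fun j _ ↦ ?_
  rw [← h.entry_smul, mul_smul_comm, smul_mul_assoc, h.mul_eq]

theorem entry_sum_smul (h : IsMatrixUnitColumns 𝕜 u v) (M : ∀ k, Matrix (m k) (m k) 𝕜) (k : κ)
    (i j : m k) :
    h.entry k i j (∑ l, ∑ p, ∑ q, M l p q • (v l p * star (v l q))) = M k i j := by
  have hterm (l : κ) (p q : m l) : star (v k i) * (v l p * star (v l q)) * v k j =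
      star (v k i) * v l p * (star (v l q) * v k j) := by simp only [mul_assoc]
  rw [entry_eq_iff]
  simp only [Finset.mul_sum, Finset.sum_mul, mul_smul_comm, smul_mul_assoc, hterm]
  rw [Fintype.sum_eq_single k fun l hl ↦ Finset.sum_eq_zero fun p _ ↦ Finset.sum_eq_zero fun q _ ↦
      by rw [h.star_mul_of_block_ne hl.symm, zero_mul, smul_zero],
    Fintype.sum_eq_single i fun p hp ↦ Finset.sum_eq_zero fun q _ ↦
      by rw [h.star_mul_of_ne k hp.symm, zero_mul, smul_zero],
    Fintype.sum_eq_single j fun q hq ↦ by rw [h.star_mul_of_ne k hq, mul_zero, smul_zero],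
    h.star_mul_self, h.star_mul_self, (h.isMinimalProjection k).isIdempotentElem.eq]

/-- The identification of `A` with the sum of matrix algebras given by matrix entries. -/
noncomputable def starAlgEquiv [StarRing 𝕜] [StarModule 𝕜 A] (h : IsMatrixUnitColumns 𝕜 u v) :
    A ≃⋆ₐ[𝕜] Π k, Matrix (m k) (m k) 𝕜 where
  toFun a k := .of fun i j ↦ h.entry k i j a
  invFun M := ∑ k, ∑ i, ∑ j, M k i j • (v k i * star (v k j))
  left_inv := h.sum_entry_smul
  right_inv M := funext fun k ↦ Matrix.ext (h.entry_sum_smul M k)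
  map_mul' a b := funext fun k ↦ Matrix.ext fun i j ↦ h.entry_mul k i j a b
  map_add' a b := by ext; simp [entry, mul_add, add_mul]
  map_star' a := funext fun k ↦ Matrix.ext fun i j ↦ h.entry_star k i j a
  map_smul' c a := by ext; simp [entry, mul_smul_comm, smul_mul_assoc]

end IsMatrixUnitColumns

theorem exists_isMatrixUnitColumns_of_murrayVonNeumannEquiv {A κ : Type*} {m : κ → Type*}
    [Fintype κ] [∀ k, Fintype (m k)] [∀ k, Nonempty (m k)] [NonUnitalCStarAlgebra A]
    {e : ∀ k, m k → A}
    (hmin : ∀ k i, IsMinimalProjection ℂ (e k i))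
    (horth : ∀ k, Pairwise fun i j ↦ e k i * e k j = 0)
    (hequiv : ∀ {k l} i j, MurrayVonNeumannEquiv (e k i) (e l j) ↔ k = l)
    (hsum : ∀ a, (∑ k, ∑ i, e k i) * a = a) :
    ∃ (u : κ → A) (v : ∀ k, m k → A), IsMatrixUnitColumns ℂ u v := by
  let i₀ (k : κ) : m k := Classical.arbitrary (m k)
  choose v hv hv' using fun k i ↦ (hequiv (i₀ k) i).mpr (rfl : k = k)
  have hmul (k : κ) (i : m k) : v k i * e k (i₀ k) = v k i := by
    rw [← hv k i]
    exact mul_star_mul_self_of_isIdempotentElem (hv k i ▸ (hmin k _).isIdempotentElem)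
  have hmul' (k : κ) (i : m k) : e k i * v k i = v k i := by
    rw [← hv' k i, mul_assoc, hv, hmul]
  have hstar (k : κ) (i : m k) : star (v k i) * e k i = star (v k i) := by
    simpa [(hmin k i).isSelfAdjoint.star_eq] using congr(star $(hmul' k i))
  refine ⟨fun k ↦ e k (i₀ k), v, fun k ↦ hmin k _, fun {k l} hkl a ↦ ?_, hmul, hv, ?_, ?_⟩
  · by_contra ha
    exact hkl ((hequiv _ _).mp (.of_mul_mul_ne_zero (hmin l _) (hmin k _) ha)).symm
  · intro k i j hij
    rw [← hstar, ← hmul' k j, ← mul_assoc, mul_assoc (star _), horth k hij, mul_zero, zero_mul]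
  · simpa only [hv'] using hsum

theorem exists_sigma_fin_equiv_rel_iff {ι : Type*} [Finite ι] (s : Setoid ι) :
    ∃ (n : ℕ) (d : Fin n → ℕ) (σ : (Σ k, Fin (d k)) ≃ ι), (∀ k, 0 < d k) ∧
      ∀ x y, s (σ x) (σ y) ↔ x.1 = y.1 := by
  classical
  have := Fintype.ofFinite ι
  let e : Fin (Fintype.card (Quotient s)) ≃ Quotient s := (Fintype.equivFin _).symm
  let d (k) : ℕ := Fintype.card {i // Quotient.mk s i = e k}
  let g (k) : Fin (d k) ≃ {i // Quotient.mk s i = e k} := (Fintype.equivFin _).symm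
  let σ : (Σ k, Fin (d k)) ≃ ι := (Equiv.sigmaCongrRight g).trans
    ((Equiv.sigmaCongrLeft (β := fun c ↦ {i // Quotient.mk s i = c}) e).trans
      (Equiv.sigmaFiberEquiv (Quotient.mk s)))
  have hσ (x) : Quotient.mk s (σ x) = e x.1 := (g x.1 x.2).2
  refine ⟨_, d, σ, fun k ↦ ?_, fun x y ↦ ?_⟩
  · obtain ⟨i, hi⟩ := Quotient.exists_rep (e k)
    exact Fintype.card_pos_iff.mpr ⟨⟨i, hi⟩⟩
  · rw [← Quotient.eq, hσ, hσ, e.injective.eq_iff]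

theorem exists_isMatrixUnitColumns_fin {A : Type*} [NonUnitalCStarAlgebra A]
    (hA : ∀ a : A, IsSelfAdjoint a → (quasispectrum ℂ a).Finite) :
    ∃ (n : ℕ) (d : Fin n → ℕ), (∀ k, 0 < d k) ∧
      ∃ (u : Fin n → A) (v : ∀ k, Fin (d k) → A), IsMatrixUnitColumns ℂ u v := by
  obtain ⟨s, hmin, horth, hsum⟩ := exists_finset_isMinimalProjection hA
  obtain ⟨n, d, σ, hd, hσ⟩ := exists_sigma_fin_equiv_rel_iff
    (MurrayVonNeumannEquiv.setoid fun p : s ↦ (hmin p p.2).toIsStarProjection)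
  have (k : Fin n) : Nonempty (Fin (d k)) := Fin.pos_iff_nonempty.mp (hd k)
  refine ⟨n, d, hd, exists_isMatrixUnitColumns_of_murrayVonNeumannEquiv
    (e := fun k i ↦ (σ ⟨k, i⟩ : A)) (fun k i ↦ hmin _ (σ _).2) (fun k i j hij ↦ ?_)
    (fun i j ↦ hσ ⟨_, i⟩ ⟨_, j⟩) ?_⟩
  · refine horth (σ _).2 (σ _).2 (Subtype.coe_ne_coe.mpr (σ.injective.ne ?_))
    exact sigma_mk_injective.ne hij
  · rwa [← Fintype.sum_sigma' fun k i ↦ (σ ⟨k, i⟩ : A), σ.sum_comp fun p : s ↦ (p : A),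
      Finset.sum_coe_sort s fun p ↦ p]

section Commutative

theorem isMulCommutative_congr {F M N : Type*} [Mul M] [Mul N] [EquivLike F M N]
    [MulEquivClass F M N] (e : F) : IsMulCommutative M ↔ IsMulCommutative N := by
  simp only [isMulCommutative_iff, (EquivLike.surjective e).forall, ← map_mul,
    (EquivLike.injective e).eq_iff]

theorem isMulCommutative_pi_iff {ι : Type*} {M : ι → Type*} [∀ i, MulZeroClass (M i)] :
    IsMulCommutative (Π i, M i) ↔ ∀ i, IsMulCommutative (M i) := by
  classical
  refine ⟨fun h i ↦ isMulCommutative_iff.mpr fun a b ↦ ?_, fun _ ↦ inferInstance⟩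
  apply Pi.single_injective i
  rw [Pi.single_mul, Pi.single_mul, mul_comm']

theorem isMulCommutative_matrix_iff {n R : Type*} [Fintype n] [CommSemiring R] [Nontrivial R] :
    IsMulCommutative (Matrix n n R) ↔ Subsingleton n := by
  classical
  refine ⟨fun h ↦ ⟨fun i j ↦ ?_⟩, fun _ ↦ isMulCommutative_iff.mpr fun M N ↦ ?_⟩
  · by_contra hij
    have hcomm : Matrix.single i j (1 : R) * .single j j 1 = .single j j 1 * .single i j 1 :=
      mul_comm' _ _
    rw [Matrix.single_mul_single_same, Matrix.single_mul_single_of_ne (h := Ne.symm hij)] at hcomm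
    simpa using congr($hcomm i j)
  · ext i j
    rw [Subsingleton.elim j i, Matrix.mul_apply, Matrix.mul_apply]
    exact Finset.sum_congr rfl fun k _ ↦ by rw [Subsingleton.elim k i, mul_comm]

end Commutative

/-- If `A` is a nonzero (not necessarily unital) C*-algebra in which the spectrum (in the
unitization) of every self-adjoint element is finite, then `A` is ⋆-isomorphic to a finite
direct sum of matrix algebras `⨁ₖ M_{dₖ}(ℂ)`, and `A` is abelian iff every `dₖ = 1`. -/
theorem star_iso_direct_sum_matrix_algebras_of_spectra_finite
    {A : Type*} [NonUnitalCStarAlgebra A] [Nontrivial A]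
    (h : ∀ a : A, IsSelfAdjoint a → (quasispectrum ℂ a).Finite) :
    ∃ (n : ℕ) (d : Fin n → ℕ), 0 < n ∧ (∀ k, 0 < d k) ∧
      Nonempty (A ≃⋆ₐ[ℂ] Π k : Fin n, Matrix (Fin (d k)) (Fin (d k)) ℂ) ∧
      ((∀ a b : A, a * b = b * a) ↔ ∀ k, d k = 1) := by
  obtain ⟨n, d, hd, u, v, huv⟩ := exists_isMatrixUnitColumns_fin h
  let φ := huv.starAlgEquiv
  refine ⟨n, d, Nat.pos_of_ne_zero ?_, hd, ⟨φ⟩, ?_⟩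
  · rintro rfl
    exact not_subsingleton A φ.injective.subsingleton
  · rw [← isMulCommutative_iff, isMulCommutative_congr φ, isMulCommutative_pi_iff]
    refine forall_congr' fun k ↦ ?_
    rw [isMulCommutative_matrix_iff, Fin.subsingleton_iff_le_one]
    have := hd k
    omega
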